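/- An ε-optimal representation in the linear class captures the top singular directions of the projected augmentation matrix: let f ∈ F_φ have normalized matrix F_n ∈ ℝ^{X×d}, and let ε = L_spec(f) − inf_{f*∈F_φ} L_spec(f*). Then for every d′ ≤ d with γ_{d′} > γ_{d+1}, ‖P⊥_{F_n} U_{:d′}‖_F² ≤ ε·d′ / (γ_{d′} − γ_{d+1})², where P⊥_{F_n} is the orthogonal projection onto the orthogonal complement of the column space of F_n. -/

import Mathlib

open Matrix Finset

variable {Xb X : Type*} [Fintype Xb] [Fintype X] [DecidableEq Xb] [DecidableEq X]

/-- Marginal probability `w(x) = ∑_{x̄} w(x̄)·w(x|x̄)` of an augmentation. -/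
noncomputable def wX (wb : Xb → ℝ) (wc : Xb → X → ℝ) (x : X) : ℝ := ∑ xb, wb xb * wc xb x

/-- Input–augmentation joint matrix `Ā[x̄,x] = w(x̄,x)`. -/
noncomputable def Abar (wb : Xb → ℝ) (wc : Xb → X → ℝ) : Matrix Xb X ℝ :=
  Matrix.of fun xb x => wb xb * wc xb x

/-- Normalized input–augmentation matrix `Ā_n = D̄^{-1/2} Ā D^{-1/2}`. -/
noncomputable def AbarN (wb : Xb → ℝ) (wc : Xb → X → ℝ) : Matrix Xb X ℝ :=
  (Matrix.diagonal fun xb => (Real.sqrt (wb xb))⁻¹) * Abar wb wc *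
    (Matrix.diagonal fun x => (Real.sqrt (wX wb wc x))⁻¹)

/-- Similarity matrix `A[x,x'] = w(x,x')`. -/
noncomputable def Amat (wb : Xb → ℝ) (wc : Xb → X → ℝ) : Matrix X X ℝ :=
  Matrix.of fun x x' => ∑ xb, wb xb * wc xb x * wc xb x'

/-- Normalized similarity matrix `A_n = D^{-1/2} A D^{-1/2}`. -/
noncomputable def AN (wb : Xb → ℝ) (wc : Xb → X → ℝ) : Matrix X X ℝ :=
  (Matrix.diagonal fun x => (Real.sqrt (wX wb wc x))⁻¹) * Amat wb wc *
    (Matrix.diagonal fun x => (Real.sqrt (wX wb wc x))⁻¹)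

/-- Normalized matrix of a map `f` w.r.t. weights `w`: rows `√(w x) · f x`. -/
noncomputable def Nmat {ι : Type*} (w : X → ℝ) (f : X → ι → ℝ) : Matrix X ι ℝ :=
  Matrix.of fun x i => Real.sqrt (w x) * f x i

/-- `P` is the orthogonal projection onto the column space of `B`. -/
def IsProjOnto {n m : Type*} [Fintype n] [Fintype m]
    (P : Matrix n n ℝ) (B : Matrix n m ℝ) : Prop :=
  P.IsSymm ∧ P * P = P ∧ LinearMap.range P.mulVecLin = LinearMap.range B.mulVecLin

/-- Squared Frobenius norm. -/
noncomputable def frobSq {n m : Type*} [Fintype n] [Fintype m] (M : Matrix n m ℝ) : ℝ :=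
  ∑ i, ∑ j, M i j ^ 2

/-- Spectral contrastive loss. -/
noncomputable def Lspec {d : ℕ} (wb : Xb → ℝ) (wc : Xb → X → ℝ) (f : X → Fin d → ℝ) : ℝ :=
  -2 * ∑ x, ∑ x', (∑ xb, wb xb * wc xb x * wc xb x') * (∑ i, f x i * f x' i)
    + ∑ x, ∑ x', wX wb wc x * wX wb wc x' * (∑ i, f x i * f x' i) ^ 2

/-- Augmentation-averaged representation `f̄(x̄) = ∑_x w(x|x̄) f(x)`. -/
noncomputable def fbar {ι : Type*} (wc : Xb → X → ℝ) (f : X → ι → ℝ) (xb : Xb) (i : ι) : ℝ :=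
  ∑ x, wc xb x * f x i

/-- Downstream classification loss. -/
noncomputable def Lclf {d : ℕ} (wb : Xb → ℝ) (wc : Xb → X → ℝ) (f : X → Fin d → ℝ)
    (ystar : Xb → ℝ) : ℝ :=
  ⨅ v : Fin d → ℝ,
    ∑ xb, wb xb * (if ystar xb * (∑ i, v i * fbar wc f xb i) < 0 then (1 : ℝ) else 0)

/-- Regression loss of features `φ` on a target `g` over augmentations. -/
noncomputable def LregPhi {ι : Type*} [Fintype ι] (w : X → ℝ) (φ : X → ι → ℝ) (g : X → ℝ) : ℝ :=
  ⨅ v : ι → ℝ, ∑ x, w x * ((∑ i, v i * φ x i) - g x) ^ 2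

/-- Inconsistency `Δ(g, y*)`. -/
noncomputable def Delta (wb : Xb → ℝ) (wc : Xb → X → ℝ) (g : X → ℝ) (ystar : Xb → ℝ) : ℝ :=
  ∑ xb, wb xb * ∑ x, wc xb x * (if g x ≠ ystar xb then (1 : ℝ) else 0)

/-- Feature covariance `Σ(φ) = ∑_x w(x)·φ(x)φ(x)ᵀ`. -/
noncomputable def SigmaPhi {ι : Type*} [Fintype ι] (w : X → ℝ) (φ : X → ι → ℝ) :
    Matrix ι ι ℝ :=
  Matrix.of fun i j => ∑ x, w x * φ x i * φ x j

/-- Averaged-feature covariance `Σ(φ̄) = ∑_{x̄} w(x̄)·φ̄(x̄)φ̄(x̄)ᵀ`. -/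
noncomputable def SigmaBar {ι : Type*} [Fintype ι] (wb : Xb → ℝ) (wc : Xb → X → ℝ)
    (φ : X → ι → ℝ) : Matrix ι ι ℝ :=
  Matrix.of fun i j => ∑ xb, wb xb * fbar wc φ xb i * fbar wc φ xb j

lemma IsProjOnto.mul_eq {n m : Type*} [Fintype n] [Fintype m] {P : Matrix n n ℝ}
    {B : Matrix n m ℝ} (h : IsProjOnto P B) : P * B = B := by
  classical
  obtain ⟨-, hid, hr⟩ := h
  refine Matrix.toLin'.injective (LinearMap.ext fun y => ?_)
  have hy : B *ᵥ y ∈ LinearMap.range P.mulVecLin := by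
    rw [hr]
    exact ⟨y, rfl⟩
  obtain ⟨z, hz⟩ := hy
  rw [Matrix.mulVecLin_apply] at hz
  rw [Matrix.toLin'_apply, Matrix.toLin'_apply, ← Matrix.mulVec_mulVec, ← hz,
    Matrix.mulVec_mulVec, hid]

lemma IsProjOnto.exists_eq_mul {n m : Type*} [Fintype n] [Fintype m] {P : Matrix n n ℝ}
    {B : Matrix n m ℝ} (h : IsProjOnto P B) : ∃ Z : Matrix m n ℝ, P = B * Z := by
  classical
  have hc : ∀ j, ∃ z : m → ℝ, B *ᵥ z = P.col j := fun j => by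
    have hj : P.col j ∈ LinearMap.range B.mulVecLin := by
      rw [← h.2.2]
      exact ⟨Pi.single j 1, by simp⟩
    exact hj
  choose z hz using hc
  refine ⟨(Matrix.of z)ᵀ, ?_⟩
  ext i j
  exact (congrFun (hz j) i).symm

lemma IsProjOnto.trace_le {n m : Type*} [Fintype n] [Fintype m] {P : Matrix n n ℝ}
    {B : Matrix n m ℝ} (h : IsProjOnto P B) : P.trace ≤ Fintype.card m := by
  classical
  have hid : IsIdempotentElem (Matrix.toLin' P) := by
    rw [IsIdempotentElem, Module.End.mul_eq_comp, ← Matrix.toLin'_mul, h.2.1]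
  have ht := LinearMap.IsProj.trace (LinearMap.isProj_range_iff_isIdempotentElem _ |>.2 hid)
  rw [Matrix.trace_toLin'_eq] at ht
  have hr : LinearMap.range (Matrix.toLin' P) = LinearMap.range B.mulVecLin := h.2.2
  rw [ht, hr]
  exact_mod_cast B.rank_le_card_width

lemma Matrix.trace_transpose_mul_self_nonneg {n m : Type*} [Fintype n] [Fintype m]
    (M : Matrix n m ℝ) : 0 ≤ (Mᵀ * M).trace := by
  simp only [Matrix.trace, Matrix.diag, Matrix.mul_apply, Matrix.transpose_apply]
  exact Finset.sum_nonneg fun _ _ => Finset.sum_nonneg fun _ _ => mul_self_nonneg _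

/-- The total overlap of an orthonormal family with an orthogonal projection is at most its
trace. -/
lemma trace_transpose_mul_mul_le {n k : Type*} [Fintype n] [Fintype k] [DecidableEq k]
    {Q : Matrix n n ℝ} {U : Matrix n k ℝ} (hs : Q.IsSymm) (hid : Q * Q = Q) (hU : Uᵀ * U = 1) :
    (Uᵀ * Q * U).trace ≤ Q.trace := by
  have h := Matrix.trace_transpose_mul_self_nonneg (Q - U * Uᵀ * Q)
  have e : (Q - U * Uᵀ * Q)ᵀ * (Q - U * Uᵀ * Q) = Q - Q * U * (Uᵀ * Q) := by
    simp only [Matrix.transpose_sub, Matrix.transpose_mul, Matrix.transpose_transpose, hs.eq,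
      Matrix.sub_mul, Matrix.mul_sub, hid]
    have h1 : Q * (U * Uᵀ) * (U * Uᵀ * Q) = Q * U * (Uᵀ * Q) := by
      calc _ = Q * U * (Uᵀ * U) * (Uᵀ * Q) := by simp only [Matrix.mul_assoc]
        _ = _ := by rw [hU, Matrix.mul_one]
    rw [h1]
    simp only [Matrix.mul_assoc]
    abel
  rw [e, Matrix.trace_sub, Matrix.trace_mul_comm (Q * U), ← Matrix.mul_assoc, Matrix.mul_assoc Uᵀ,
    hid] at h
  linarith

/-- Completing the square for the spectral loss on the range of a projection `Q`. -/
lemma neg_trace_le_spectral {n k : Type*} [Fintype n] [Fintype k]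
    {Q B : Matrix n n ℝ} {F : Matrix n k ℝ} (hs : Q.IsSymm) (hid : Q * Q = Q) (hB : B.IsSymm)
    (hF : Q * F = F) :
    -(B * B * Q).trace ≤ -2 * (B * (F * Fᵀ)).trace + (F * Fᵀ * (F * Fᵀ)).trace := by
  have h := Matrix.trace_transpose_mul_self_nonneg (B * Q - F * Fᵀ)
  have hF' : Fᵀ * Q = Fᵀ := by
    simpa [Matrix.transpose_mul, hs.eq] using congrArg Matrix.transpose hF
  simp only [Matrix.transpose_sub, Matrix.transpose_mul, Matrix.transpose_transpose, hs.eq, hB.eq,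
    Matrix.sub_mul, Matrix.mul_sub, Matrix.trace_sub] at h
  have h1 : (Q * B * (B * Q)).trace = (B * B * Q).trace := by
    rw [Matrix.mul_assoc, Matrix.trace_mul_comm, ← Matrix.mul_assoc, Matrix.mul_assoc (B * B),
      Matrix.mul_assoc]
    simp only [Matrix.mul_assoc, hid]
  have h2 : (Q * B * (F * Fᵀ)).trace = (B * (F * Fᵀ)).trace := by
    rw [Matrix.mul_assoc, Matrix.trace_mul_comm]
    simp only [Matrix.mul_assoc, hF']
  have h3 : (F * Fᵀ * (B * Q)).trace = (B * (F * Fᵀ)).trace := by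
    rw [Matrix.trace_mul_comm, Matrix.mul_assoc, ← Matrix.mul_assoc Q, hF]
  rw [h1, h2, h3] at h
  linarith

lemma transpose_AbarN_mul_AbarN_apply {wb : Xb → ℝ} (wc : Xb → X → ℝ)
    (hwb : ∀ xb, 0 < wb xb) (x x' : X) :
    ((AbarN wb wc)ᵀ * AbarN wb wc) x x' =
      (√(wX wb wc x))⁻¹ * (√(wX wb wc x'))⁻¹ * ∑ xb, wb xb * wc xb x * wc xb x' := by
  rw [Matrix.mul_apply, Finset.mul_sum]
  refine Finset.sum_congr rfl fun xb _ => ?_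
  simp only [AbarN, Abar, Matrix.transpose_apply, Matrix.mul_diagonal, Matrix.diagonal_mul,
    Matrix.of_apply]
  have h : (√(wb xb))⁻¹ * (√(wb xb))⁻¹ * wb xb = 1 := by
    rw [← mul_inv, Real.mul_self_sqrt (hwb xb).le, inv_mul_cancel₀ (hwb xb).ne']
  linear_combination (wb xb * wc xb x * wc xb x' * (√(wX wb wc x))⁻¹ * (√(wX wb wc x'))⁻¹) * h

lemma Lspec_eq_trace {d : ℕ} {wb : Xb → ℝ} {wc : Xb → X → ℝ}
    (hwb : ∀ xb, 0 < wb xb) (hwx : ∀ x, 0 < wX wb wc x) {f : X → Fin d → ℝ}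
    {F : Matrix X (Fin d) ℝ} (hF : Nmat (wX wb wc) f = F) :
    Lspec wb wc f = -2 * ((AbarN wb wc)ᵀ * AbarN wb wc * (F * Fᵀ)).trace
      + (F * Fᵀ * (F * Fᵀ)).trace := by
  subst hF
  have hG : ∀ x x', (Nmat (wX wb wc) f * (Nmat (wX wb wc) f)ᵀ) x x' =
      √(wX wb wc x) * √(wX wb wc x') * ∑ i, f x i * f x' i := fun x x' => by
    simp only [Nmat, Matrix.mul_apply, Matrix.transpose_apply, Matrix.of_apply, Finset.mul_sum]
    exact Finset.sum_congr rfl fun i _ => by ring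
  have hsq : ∀ x, √(wX wb wc x) * √(wX wb wc x) = wX wb wc x := fun x =>
    Real.mul_self_sqrt (hwx x).le
  have hinv : ∀ x, (√(wX wb wc x))⁻¹ * √(wX wb wc x) = 1 := fun x =>
    inv_mul_cancel₀ (Real.sqrt_pos.2 (hwx x)).ne'
  have hcomm : ∀ x x', ∑ i, f x' i * f x i = ∑ i, f x i * f x' i := fun x x' =>
    Finset.sum_congr rfl fun i _ => mul_comm _ _
  unfold Lspec
  congr 1
  · congr 1
    simp only [Matrix.trace, Matrix.diag]
    refine Finset.sum_congr rfl fun x _ => ?_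
    rw [Matrix.mul_apply]
    refine Finset.sum_congr rfl fun x' _ => ?_
    rw [transpose_AbarN_mul_AbarN_apply wc hwb, hG, hcomm x x']
    set a := ∑ xb, wb xb * wc xb x * wc xb x'
    set b := ∑ i, f x i * f x' i
    linear_combination (-a * b * (√(wX wb wc x'))⁻¹ * √(wX wb wc x')) * hinv x
      - a * b * hinv x'
  · simp only [Matrix.trace, Matrix.diag]
    refine Finset.sum_congr rfl fun x _ => ?_
    rw [Matrix.mul_apply]
    refine Finset.sum_congr rfl fun x' _ => ?_
    rw [hG, hG, hcomm x x', ← hsq x, ← hsq x']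
    simp only [hsq]
    set b := ∑ i, f x i * f x' i
    linear_combination (-b ^ 2 * wX wb wc x') * hsq x
      - b ^ 2 * √(wX wb wc x) * √(wX wb wc x) * hsq x'

/-- Total weight at most `d` in `[0, 1]`, spread over a nonincreasing sequence `γ`, loses at least
the squared spectral gap times the weight missing from the leading terms. -/
lemma sq_gap_mul_sum_le {m d d' : ℕ} {γ c : ℕ → ℝ} (hγnonneg : ∀ i, 0 ≤ γ i)
    (hγmono : ∀ i j, 1 ≤ i → i ≤ j → γ j ≤ γ i) (hγpad : ∀ i, m < i → γ i = 0)
    (hc0 : ∀ i ∈ Finset.Icc 1 m, 0 ≤ c i) (hc1 : ∀ i ∈ Finset.Icc 1 m, c i ≤ 1)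
    (hcd : ∑ i ∈ Finset.Icc 1 m, c i ≤ d) (hd'd : d' ≤ d) (hd'm : d' ≤ m)
    (hgap : γ (d + 1) ≤ γ d') :
    (γ d' - γ (d + 1)) ^ 2 * ∑ i ∈ Finset.Icc 1 d', (1 - c i) ≤
      ∑ i ∈ Finset.Icc 1 m, ((if i ≤ d then 1 else 0) - c i) * γ i ^ 2 := by
  have hsplit : ∑ i ∈ Finset.Icc 1 m, ((if i ≤ d then 1 else 0) - c i) * γ i ^ 2 =
      ∑ i ∈ Finset.Icc 1 m, ((if i ≤ d then 1 else 0) - c i) * (γ i ^ 2 - γ (d + 1) ^ 2) +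
        γ (d + 1) ^ 2 * ∑ i ∈ Finset.Icc 1 m, ((if i ≤ d then 1 else 0) - c i) := by
    rw [Finset.mul_sum, ← Finset.sum_add_distrib]
    exact Finset.sum_congr rfl fun i _ => by ring
  have hrest : 0 ≤ γ (d + 1) ^ 2 *
      ∑ i ∈ Finset.Icc 1 m, ((if i ≤ d then (1 : ℝ) else 0) - c i) := by
    rcases lt_or_ge m (d + 1) with h | h
    · simp [hγpad _ h]
    · refine mul_nonneg (sq_nonneg _) ?_
      have hfilter : (Finset.Icc 1 m).filter (· ≤ d) = Finset.Icc 1 d := by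
        ext i
        simp only [Finset.mem_filter, Finset.mem_Icc]
        omega
      rw [Finset.sum_sub_distrib, ← Finset.sum_filter, hfilter]
      simpa using hcd
  have hterm : ∀ i ∈ Finset.Icc 1 m,
      0 ≤ ((if i ≤ d then (1 : ℝ) else 0) - c i) * (γ i ^ 2 - γ (d + 1) ^ 2) := fun i hi => by
    split_ifs with h
    · exact mul_nonneg (sub_nonneg.2 (hc1 i hi)) (sub_nonneg.2 (pow_le_pow_left₀ (hγnonneg _)
        (hγmono i (d + 1) (Finset.mem_Icc.1 hi).1 (by omega)) 2))
    · exact mul_nonneg_of_nonpos_of_nonpos (by simpa using hc0 i hi) (sub_nonpos.2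
        (pow_le_pow_left₀ (hγnonneg _) (hγmono (d + 1) i (by omega) (by omega)) 2))
  have hsub : Finset.Icc 1 d' ⊆ Finset.Icc 1 m := Finset.Icc_subset_Icc_right hd'm
  calc (γ d' - γ (d + 1)) ^ 2 * ∑ i ∈ Finset.Icc 1 d', (1 - c i)
      = ∑ i ∈ Finset.Icc 1 d', (1 - c i) * (γ d' - γ (d + 1)) ^ 2 := by
        rw [mul_comm, Finset.sum_mul]
    _ ≤ ∑ i ∈ Finset.Icc 1 d',
          ((if i ≤ d then (1 : ℝ) else 0) - c i) * (γ i ^ 2 - γ (d + 1) ^ 2) := by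
        refine Finset.sum_le_sum fun i hi => ?_
        have hi' := Finset.mem_Icc.1 hi
        rw [if_pos (by omega)]
        refine mul_le_mul_of_nonneg_left ?_ (sub_nonneg.2 (hc1 i (hsub hi)))
        have h1 := hγmono i d' hi'.1 hi'.2
        have h2 := pow_le_pow_left₀ (hγnonneg _) h1 2
        nlinarith [mul_nonneg (hγnonneg (d + 1)) (sub_nonneg.2 hgap)]
    _ ≤ ∑ i ∈ Finset.Icc 1 m,
          ((if i ≤ d then (1 : ℝ) else 0) - c i) * (γ i ^ 2 - γ (d + 1) ^ 2) :=
        Finset.sum_le_sum_of_subset_of_nonneg hsub fun i hi _ => hterm i hi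
    _ ≤ _ := by
        rw [hsplit]
        linarith

omit [Fintype X] [DecidableEq X] in
lemma Nmat_linear_eq_mul {k l : Type*} [Fintype k] (w : X → ℝ) (φ : X → k → ℝ)
    (W : Matrix k l ℝ) : Nmat w (fun x i => ∑ j, W j i * φ x j) = Nmat w φ * W := by
  ext x i
  simp only [Nmat, Matrix.mul_apply, Matrix.of_apply, Finset.mul_sum]
  exact Finset.sum_congr rfl fun j _ => by ring

/-- For an orthogonal projection `Q` and a unit vector `a`, `aᵀQa = 1 - ‖(1 - Q)a‖²`. -/
lemma one_sub_sum_sq_eq_dotProduct {n : Type*} [Fintype n] [DecidableEq n] {Q : Matrix n n ℝ}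
    (hs : Q.IsSymm) (hid : Q * Q = Q) {a : n → ℝ} (ha : ∑ x, a x * a x = 1) :
    1 - ∑ x, ((1 - Q) *ᵥ a) x ^ 2 = a ⬝ᵥ Q *ᵥ a := by
  have h1 : ∑ x, ((1 - Q) *ᵥ a) x ^ 2 = (1 - Q) *ᵥ a ⬝ᵥ (1 - Q) *ᵥ a := by
    simp [dotProduct, sq]
  have h2 : Q *ᵥ a ⬝ᵥ Q *ᵥ a = a ⬝ᵥ Q *ᵥ a := by
    rw [Matrix.dotProduct_mulVec, Matrix.vecMul_mulVec, hs.eq, hid, dotProduct_comm,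
      ← Matrix.mulVec_transpose, hs.eq]
  have h3 : a ⬝ᵥ a = 1 := ha
  rw [h1, Matrix.sub_mulVec, Matrix.one_mulVec, sub_dotProduct, dotProduct_sub, dotProduct_sub, h2,
    h3, dotProduct_comm (Q *ᵥ a)]
  ring

/-- The rank-`d` truncation of `U S` attains minus the sum of the squared `d` leading eigenvalues
of `U S² Uᵀ`. -/
lemma spectral_truncation {n k : Type*} [Fintype n] [Fintype k] [DecidableEq k] {l : Type*}
    [Fintype l] {U : Matrix n k ℝ} {s t : k → ℝ} {E : Matrix k l ℝ} (hU : Uᵀ * U = 1)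
    (hE : E * Eᵀ = diagonal t) (ht : ∀ i, t i * t i = t i) :
    -2 * (U * diagonal s * (U * diagonal s)ᵀ * (U * diagonal s * E * (U * diagonal s * E)ᵀ)).trace
      + (U * diagonal s * E * (U * diagonal s * E)ᵀ *
          (U * diagonal s * E * (U * diagonal s * E)ᵀ)).trace
      = -∑ i, t i * (s i ^ 2) ^ 2 := by
  have conj : ∀ r q : k → ℝ, (U * diagonal r * Uᵀ * (U * diagonal q * Uᵀ)).trace
      = ∑ i, r i * q i := fun r q => by
    have h : U * diagonal r * Uᵀ * (U * diagonal q * Uᵀ) =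
        U * diagonal r * (Uᵀ * U) * (diagonal q * Uᵀ) := by simp only [Matrix.mul_assoc]
    rw [h, hU, Matrix.mul_one, Matrix.trace_mul_comm, Matrix.mul_assoc, ← Matrix.mul_assoc Uᵀ, hU,
      Matrix.one_mul, Matrix.diagonal_mul_diagonal, Matrix.trace_diagonal]
    exact Finset.sum_congr rfl fun i _ => mul_comm _ _
  have h1 : U * diagonal s * (U * diagonal s)ᵀ = U * diagonal (fun i => s i * s i) * Uᵀ := by
    rw [← Matrix.diagonal_mul_diagonal, Matrix.transpose_mul, Matrix.diagonal_transpose]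
    simp only [Matrix.mul_assoc]
  have h2 : U * diagonal s * E * (U * diagonal s * E)ᵀ =
      U * diagonal (fun i => s i * (t i * s i)) * Uᵀ := by
    rw [← Matrix.diagonal_mul_diagonal, ← Matrix.diagonal_mul_diagonal, ← hE, Matrix.transpose_mul,
      Matrix.transpose_mul, Matrix.diagonal_transpose]
    simp only [Matrix.mul_assoc]
  rw [h1, h2, conj, conj, Finset.mul_sum, ← Finset.sum_add_distrib, ← Finset.sum_neg_distrib]
  refine Finset.sum_congr rfl fun i _ => ?_
  linear_combination s i ^ 4 * ht i

/-- an ε-optimal representation in the linear class captures the top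
singular directions of `P_{Φ_n} Ā_nᵀ`:
`‖P⊥_{F_n} U_{:d′}‖_F² ≤ ε·d′ / (γ_{d′} − γ_{d+1})²`. -/
theorem eps_optimal_captures_top_directions {D d : ℕ} [Nonempty Xb] [Nonempty X]
    (wb : Xb → ℝ) (wc : Xb → X → ℝ)
    (hwb : ∀ xb, 0 < wb xb) (hwbsum : ∑ xb, wb xb = 1)
    (hwc : ∀ xb x, 0 ≤ wc xb x) (hwcsum : ∀ xb, ∑ x, wc xb x = 1)
    (hwx : ∀ x, 0 < wX wb wc x)
    (φ : X → Fin D → ℝ)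
    (P : Matrix X X ℝ) (hP : IsProjOnto P (Nmat (wX wb wc) φ))
    (W : Matrix (Fin D) (Fin d) ℝ) (f : X → Fin d → ℝ)
    (hf : ∀ x i, f x i = ∑ j, W j i * φ x j)
    (PF : Matrix X X ℝ) (hPF : IsProjOnto PF (Nmat (wX wb wc) f))
    (γ : ℕ → ℝ) (u : ℕ → X → ℝ) (v : ℕ → Xb → ℝ)
    (hγnonneg : ∀ i, 0 ≤ γ i)
    (hγmono : ∀ i j, 1 ≤ i → i ≤ j → γ j ≤ γ i)
    (hγpad : ∀ i, min (Fintype.card X) (Fintype.card Xb) < i → γ i = 0)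
    (hu : ∀ i ∈ Finset.Icc 1 (min (Fintype.card X) (Fintype.card Xb)),
        ∀ j ∈ Finset.Icc 1 (min (Fintype.card X) (Fintype.card Xb)),
        ∑ x, u i x * u j x = if i = j then (1 : ℝ) else 0)
    (hv : ∀ i ∈ Finset.Icc 1 (Fintype.card Xb), ∀ j ∈ Finset.Icc 1 (Fintype.card Xb),
        ∑ xb, v i xb * v j xb = if i = j then (1 : ℝ) else 0)
    (hsvd : ∀ x xb, (P * (AbarN wb wc)ᵀ) x xb
        = ∑ i ∈ Finset.Icc 1 (min (Fintype.card X) (Fintype.card Xb)),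
            Real.sqrt (γ i) * u i x * v i xb)
    (d' : ℕ) (hd'1 : 1 ≤ d') (hd'd : d' ≤ d) (hgap : γ (d + 1) < γ d') :
    ∑ i ∈ Finset.Icc 1 d', ∑ x, ((1 - PF).mulVec (u i)) x ^ 2
      ≤ (Lspec wb wc f
            - ⨅ W' : Matrix (Fin D) (Fin d) ℝ, Lspec wb wc fun x i => ∑ j, W' j i * φ x j)
          * d' / (γ d' - γ (d + 1)) ^ 2 := by
  classical
  set m := min (Fintype.card X) (Fintype.card Xb) with hm
  set w := wX wb wc
  have hPs := hP.1
  obtain ⟨hQs, hQid, -⟩ := id hPF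
  have hd'm : d' ≤ m := by
    by_contra! h
    exact absurd hgap (by simpa [hγpad d' h] using hγnonneg (d + 1))
  let U : Matrix X (Finset.Icc 1 m) ℝ := Matrix.of fun x i => u i x
  let V : Matrix Xb (Finset.Icc 1 m) ℝ := Matrix.of fun x i => v i x
  let s : Finset.Icc 1 m → ℝ := fun i => √(γ i)
  have hss : ∀ i, s i ^ 2 = γ i := fun i => Real.sq_sqrt (hγnonneg i)
  have hUU : Uᵀ * U = 1 := by
    ext i j
    rw [Matrix.one_apply, Matrix.mul_apply]
    simp only [Subtype.ext_iff]
    exact hu i i.2 j j.2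
  have hVV : Vᵀ * V = 1 := by
    have hsub : Finset.Icc 1 m ⊆ Finset.Icc 1 (Fintype.card Xb) :=
      Finset.Icc_subset_Icc_right (min_le_right _ _)
    ext i j
    rw [Matrix.one_apply, Matrix.mul_apply]
    simp only [Subtype.ext_iff]
    exact hv i (hsub i.2) j (hsub j.2)
  have hPA : P * (AbarN wb wc)ᵀ = U * diagonal s * Vᵀ := by
    ext x xb
    rw [hsvd, ← Finset.sum_coe_sort, Matrix.mul_apply]
    refine Finset.sum_congr rfl fun i _ => ?_
    simp only [Matrix.mul_diagonal, Matrix.transpose_apply, U, V, s, Matrix.of_apply]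
    ring
  set B : Matrix X X ℝ := U * diagonal s * (U * diagonal s)ᵀ with hB
  have hBs : B.IsSymm := by
    rw [hB, Matrix.IsSymm, Matrix.transpose_mul, Matrix.transpose_transpose]
  have hPB : P * ((AbarN wb wc)ᵀ * AbarN wb wc) * P = B := by
    have h : P * ((AbarN wb wc)ᵀ * AbarN wb wc) * P =
        P * (AbarN wb wc)ᵀ * (P * (AbarN wb wc)ᵀ)ᵀ := by
      rw [Matrix.transpose_mul, Matrix.transpose_transpose, hPs.eq]
      simp only [Matrix.mul_assoc]
    rw [h, hPA, hB, Matrix.transpose_mul, Matrix.transpose_transpose, Matrix.mul_assoc,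
      ← Matrix.mul_assoc Vᵀ, hVV, Matrix.one_mul]
  have hL : ∀ W' : Matrix (Fin D) (Fin d) ℝ, Lspec wb wc (fun x i => ∑ j, W' j i * φ x j) =
      -2 * (B * (Nmat w φ * W' * (Nmat w φ * W')ᵀ)).trace
        + (Nmat w φ * W' * (Nmat w φ * W')ᵀ * (Nmat w φ * W' * (Nmat w φ * W')ᵀ)).trace := by
    intro W'
    rw [Lspec_eq_trace hwb hwx (Nmat_linear_eq_mul w φ W')]
    have hFP : P * (Nmat w φ * W') = Nmat w φ * W' := by rw [← Matrix.mul_assoc, hP.mul_eq]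
    have hFP' : (Nmat w φ * W')ᵀ * P = (Nmat w φ * W')ᵀ := by
      simpa only [Matrix.transpose_mul P, hPs.eq] using congrArg Matrix.transpose hFP
    generalize Nmat w φ * W' = F at *
    rw [← hPB, Matrix.mul_assoc P, Matrix.mul_assoc P, Matrix.trace_mul_comm P]
    simp only [Matrix.mul_assoc, hFP']
    simp only [← Matrix.mul_assoc P, hFP]
  have hbdd : BddBelow (Set.range fun W' : Matrix (Fin D) (Fin d) ℝ =>
      Lspec wb wc fun x i => ∑ j, W' j i * φ x j) := by
    refine ⟨-(B * B * 1).trace, ?_⟩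
    rintro _ ⟨W', rfl⟩
    simp only [hL]
    exact neg_trace_le_spectral Matrix.isSymm_one (Matrix.one_mul 1) hBs (Matrix.one_mul _)
  have hupper : (⨅ W' : Matrix (Fin D) (Fin d) ℝ, Lspec wb wc fun x i => ∑ j, W' j i * φ x j) ≤
      -∑ i ∈ Finset.Icc 1 m, (if i ≤ d then 1 else 0) * γ i ^ 2 := by
    obtain ⟨Z, hZ⟩ := hP.exists_eq_mul
    let E : Matrix (Finset.Icc 1 m) (Fin d) ℝ :=
      Matrix.of fun i j => if (i : ℕ) = j + 1 then 1 else 0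
    have hE : E * Eᵀ = diagonal fun i : Finset.Icc 1 m => if (i : ℕ) ≤ d then 1 else 0 := by
      ext i j
      have hi := Finset.mem_Icc.1 i.2
      simp only [E, Matrix.mul_apply, Matrix.transpose_apply, Matrix.of_apply,
        Matrix.diagonal_apply]
      by_cases hid : (i : ℕ) ≤ d
      · rw [Finset.sum_eq_single (⟨i - 1, by omega⟩ : Fin d)]
        · have h1 : (i : ℕ) = i - 1 + 1 := by omega
          simp only [← h1, hid, if_true, one_mul, Subtype.ext_iff, eq_comm]
        · intro b _ hb
          rw [if_neg, zero_mul]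
          exact fun h => hb (Fin.ext (by simp; omega))
        · simp
      · rw [if_neg hid, ite_self]
        refine Finset.sum_eq_zero fun b _ => ?_
        rw [if_neg (by omega), zero_mul]
    refine (ciInf_le hbdd (Z * (AbarN wb wc)ᵀ * V * E)).trans ?_
    have hF : Nmat w φ * (Z * (AbarN wb wc)ᵀ * V * E) = U * diagonal s * E := by
      simp only [← Matrix.mul_assoc]
      rw [← hZ, hPA, Matrix.mul_assoc _ Vᵀ, hVV, Matrix.mul_one]
    rw [hL, hF, hB, spectral_truncation hUU hE fun i => by split_ifs <;> simp]
    simp only [hss]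
    rw [← Finset.sum_coe_sort (Finset.Icc 1 m)]
  let c : ℕ → ℝ := fun i => 1 - ∑ x, ((1 - PF) *ᵥ u i) x ^ 2
  have hc : ∀ i : Finset.Icc 1 m, c i = (Uᵀ * PF * U) i i := fun i => by
    have hui : ∑ x, u i x * u i x = 1 := by simpa using hu i i.2 i i.2
    rw [Matrix.mul_assoc]
    exact one_sub_sum_sq_eq_dotProduct hQs hQid hui
  have hc0 : ∀ i ∈ Finset.Icc 1 m, 0 ≤ c i := fun i hi => by
    have h : (Uᵀ * PF * U) = (PF * U)ᵀ * (PF * U) := by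
      rw [Matrix.transpose_mul, hQs.eq, Matrix.mul_assoc, Matrix.mul_assoc, ← Matrix.mul_assoc PF,
        hQid]
    rw [hc ⟨i, hi⟩, h, Matrix.mul_apply]
    exact Finset.sum_nonneg fun _ _ => mul_self_nonneg _
  have hc1 : ∀ i ∈ Finset.Icc 1 m, c i ≤ 1 := fun i _ =>
    sub_le_self _ (Finset.sum_nonneg fun _ _ => sq_nonneg _)
  have hcd : ∑ i ∈ Finset.Icc 1 m, c i ≤ d := by
    rw [← Finset.sum_coe_sort]
    simp only [hc]
    simpa only [Matrix.trace, Matrix.diag_apply, Fintype.card_fin] using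
      (trace_transpose_mul_mul_le hQs hQid hUU).trans hPF.trace_le
  have hlower : -∑ i ∈ Finset.Icc 1 m, c i * γ i ^ 2 ≤ Lspec wb wc f := by
    obtain rfl : f = fun x i => ∑ j, W j i * φ x j := funext₂ hf
    have hQF := hPF.mul_eq
    rw [Nmat_linear_eq_mul] at hQF
    rw [hL]
    refine le_of_eq_of_le ?_ (neg_trace_le_spectral hQs hQid hBs hQF)
    have hBU : B * U = U * diagonal fun i => s i * s i := by
      rw [hB, Matrix.transpose_mul, Matrix.diagonal_transpose, ← Matrix.diagonal_mul_diagonal]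
      simp only [Matrix.mul_assoc, hUU, Matrix.mul_one]
    have hBB : B * B * PF = U * diagonal (fun i => s i * s i * (s i * s i)) * (Uᵀ * PF) := by
      nth_rewrite 2 [hB]
      rw [Matrix.transpose_mul, Matrix.diagonal_transpose, ← Matrix.mul_assoc, ← Matrix.mul_assoc,
        ← Matrix.mul_assoc, hBU, Matrix.mul_assoc U, Matrix.mul_assoc U]
      simp only [Matrix.mul_assoc, ← Matrix.diagonal_mul_diagonal]
    rw [hBB, Matrix.mul_assoc, Matrix.trace_mul_comm, Matrix.mul_assoc, ← Finset.sum_coe_sort]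
    simp only [Matrix.trace, Matrix.diag, Matrix.diagonal_mul, hc, ← sq, hss]
    simp only [mul_comm]
  have hmain := sq_gap_mul_sum_le hγnonneg hγmono hγpad hc0 hc1 hcd hd'd hd'm hgap.le
  have hsum : 0 ≤ ∑ i ∈ Finset.Icc 1 d', ∑ x, ((1 - PF) *ᵥ u i) x ^ 2 :=
    Finset.sum_nonneg fun _ _ => Finset.sum_nonneg fun _ _ => sq_nonneg _
  have hε : (γ d' - γ (d + 1)) ^ 2 * ∑ i ∈ Finset.Icc 1 d', ∑ x, ((1 - PF) *ᵥ u i) x ^ 2 ≤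
      Lspec wb wc f -
        ⨅ W' : Matrix (Fin D) (Fin d) ℝ, Lspec wb wc fun x i => ∑ j, W' j i * φ x j := by
    have hc' : ∀ i, ∑ x, ((1 - PF) *ᵥ u i) x ^ 2 = 1 - c i := fun i => (sub_sub_cancel _ _).symm
    simp only [hc']
    refine hmain.trans ?_
    simp only [sub_mul _ _ (γ _ ^ 2)]
    rw [Finset.sum_sub_distrib]
    linarith
  rw [le_div_iff₀ (pow_pos (sub_pos.2 hgap) 2), mul_comm]
  exact hε.trans (le_mul_of_one_le_right ((mul_nonneg (sq_nonneg _) hsum).trans hε)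
    (by exact_mod_cast hd'1))
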